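/- For every δ with 0 < δ ≤ 1, every real number q > −1/2, and every t ≥ 0, ( δ / √(1 + δ·log(1+t)) ) · ∫_1^{1+log(1+t)} x^q / √(1 + δ(x−1)) dx ≤ (1 + log(1+t))^q / (q + 1/2). Here log denotes the natural logarithm. -/

import Mathlib

open Real intervalIntegral

/-!
For `δ ≤ 1` one has `δ * x ≤ 1 + δ * (x - 1)`, hence `√δ / √(1 + δ * (x - 1)) ≤ 1 / √x`. Split the
factor `δ` as `√δ * √δ`: one `√δ` turns the integrand into at most `x ^ (q - 1 / 2)`, whose integral
is explicit, and the other bounds the prefactor by the same inequality at the upper endpoint.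
-/

lemma sqrt_mul_sqrt_le_sqrt_one_add_mul_sub_one {δ x : ℝ} (hδ : δ ≤ 1) (hx : 0 ≤ x) :
    √δ * √x ≤ √(1 + δ * (x - 1)) := by
  rw [← sqrt_mul' δ hx]
  exact sqrt_le_sqrt (by linarith)

lemma sqrt_div_sqrt_one_add_mul_sub_one_le {δ x : ℝ} (hδ : δ ≤ 1) (hx : 0 < x) :
    √δ / √(1 + δ * (x - 1)) ≤ (√x)⁻¹ := by
  refine div_le_of_le_mul₀ (sqrt_nonneg _) (by positivity) ?_
  rw [le_inv_mul_iff₀ (sqrt_pos.2 hx), mul_comm]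
  exact sqrt_mul_sqrt_le_sqrt_one_add_mul_sub_one hδ hx.le

lemma one_add_mul_sub_one_pos {δ x : ℝ} (hδ₀ : 0 ≤ δ) (hδ₁ : δ ≤ 1) (hx : 0 < x) :
    0 < 1 + δ * (x - 1) := by
  rcases hδ₀.eq_or_lt with rfl | hδ
  · simp
  · linarith [mul_pos hδ hx]

lemma intervalIntegrable_rpow_div_sqrt_one_add_mul_sub_one {δ a b : ℝ} (hδ₀ : 0 ≤ δ) (hδ₁ : δ ≤ 1)
    (q : ℝ) (ha : 0 < a) (hb : 0 < b) :
    IntervalIntegrable (fun x ↦ x ^ q / √(1 + δ * (x - 1))) MeasureTheory.volume a b := by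
  have pos_of_mem {x : ℝ} (hx : x ∈ Set.uIcc a b) : 0 < x := (lt_min ha hb).trans_le hx.1
  refine ContinuousOn.intervalIntegrable (ContinuousOn.div ?_ (by fun_prop) fun x hx ↦ ?_)
  · exact continuousOn_id.rpow_const fun x hx ↦ .inl (pos_of_mem hx).ne'
  · exact (sqrt_pos.2 (one_add_mul_sub_one_pos hδ₀ hδ₁ (pos_of_mem hx))).ne'

lemma sqrt_mul_integral_rpow_div_sqrt_le {δ a b : ℝ} (hδ₀ : 0 ≤ δ) (hδ₁ : δ ≤ 1) (q : ℝ)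
    (ha : 0 < a) (hab : a ≤ b) :
    √δ * ∫ x in a..b, x ^ q / √(1 + δ * (x - 1)) ≤ ∫ x in a..b, x ^ (q - 1 / 2) := by
  have hb : 0 < b := ha.trans_le hab
  rw [← integral_const_mul]
  refine integral_mono_on hab
    ((intervalIntegrable_rpow_div_sqrt_one_add_mul_sub_one hδ₀ hδ₁ q ha hb).const_mul _)
    (intervalIntegrable_rpow (.inr (Set.notMem_uIcc_of_lt ha hb))) fun x hx ↦ ?_
  have hx₀ : 0 < x := ha.trans_le hx.1
  calc √δ * (x ^ q / √(1 + δ * (x - 1)))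
      = x ^ q * (√δ / √(1 + δ * (x - 1))) := mul_div_left_comm _ _ _
    _ ≤ x ^ q * (√x)⁻¹ := by
      gcongr
      exact sqrt_div_sqrt_one_add_mul_sub_one_le hδ₁ hx₀
    _ = x ^ (q - 1 / 2) := by rw [rpow_sub hx₀, ← sqrt_eq_rpow, div_eq_mul_inv]

lemma inv_sqrt_mul_integral_one_rpow {q b : ℝ} (hq : q ≠ -(1 / 2)) (hb : 0 < b) :
    (√b)⁻¹ * ∫ x in (1 : ℝ)..b, x ^ (q - 1 / 2) =
      (b ^ q - b ^ (-(1 / 2) : ℝ)) / (q + 1 / 2) := by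
  have hexp : q - 1 / 2 ≠ -1 := fun h ↦ hq (by linarith)
  rw [integral_rpow (.inr ⟨hexp, Set.notMem_uIcc_of_lt one_pos hb⟩),
    show q - 1 / 2 + 1 = q + 1 / 2 by ring, one_rpow, sqrt_eq_rpow, ← rpow_neg hb.le,
    mul_div_assoc', mul_sub, mul_one, ← rpow_add hb, neg_add_cancel_comm_assoc]

theorem I_q_delta_product_bound_general {δ q l : ℝ} (hδ₀ : 0 ≤ δ) (hδ₁ : δ ≤ 1)
    (hq : q ≠ -(1 / 2)) (hl : 0 ≤ l) :
    (δ / √(1 + δ * l)) * ∫ x in (1 : ℝ)..(1 + l), x ^ q / √(1 + δ * (x - 1)) ≤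
      ((1 + l) ^ q - (1 + l) ^ (-(1 / 2) : ℝ)) / (q + 1 / 2) := by
  have one_le : 1 ≤ 1 + l := le_add_of_nonneg_right hl
  have prefactor_le : √δ / √(1 + δ * l) ≤ (√(1 + l))⁻¹ := by
    simpa using sqrt_div_sqrt_one_add_mul_sub_one_le (x := 1 + l) hδ₁ (by positivity)
  have integral_rpow_nonneg : 0 ≤ ∫ x in (1 : ℝ)..(1 + l), x ^ (q - 1 / 2) :=
    integral_nonneg one_le fun x hx ↦ rpow_nonneg (zero_le_one.trans hx.1) _
  calc (δ / √(1 + δ * l)) * ∫ x in (1 : ℝ)..(1 + l), x ^ q / √(1 + δ * (x - 1))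
      = (√δ / √(1 + δ * l)) *
          (√δ * ∫ x in (1 : ℝ)..(1 + l), x ^ q / √(1 + δ * (x - 1))) := by
        rw [← mul_assoc, div_mul_eq_mul_div √δ, mul_self_sqrt hδ₀]
    _ ≤ (√δ / √(1 + δ * l)) * ∫ x in (1 : ℝ)..(1 + l), x ^ (q - 1 / 2) := by
        gcongr
        exact sqrt_mul_integral_rpow_div_sqrt_le hδ₀ hδ₁ q one_pos one_le
    _ ≤ (√(1 + l))⁻¹ * ∫ x in (1 : ℝ)..(1 + l), x ^ (q - 1 / 2) := by gcongr
    _ = ((1 + l) ^ q - (1 + l) ^ (-(1 / 2) : ℝ)) / (q + 1 / 2) :=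
        inv_sqrt_mul_integral_one_rpow hq (by positivity)

/-- For `0 < δ ≤ 1`, `q > -1/2`, `t ≥ 0`:
`(δ/√(1+δ log(1+t))) ∫_1^{1+log(1+t)} x^q / √(1+δ(x-1)) dx ≤ (1+log(1+t))^q / (q+1/2)`. -/
theorem I_q_delta_product_bound (δ : ℝ) (hδ0 : 0 < δ) (hδ1 : δ ≤ 1)
    (q : ℝ) (hq : -(1 / 2) < q) (t : ℝ) (ht : 0 ≤ t) :
    (δ / Real.sqrt (1 + δ * Real.log (1 + t))) *
        ∫ x in (1 : ℝ)..(1 + Real.log (1 + t)), x ^ q / Real.sqrt (1 + δ * (x - 1))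
      ≤ (1 + Real.log (1 + t)) ^ q / (q + 1 / 2) := by
  have hlog : 0 ≤ log (1 + t) := log_nonneg (le_add_of_nonneg_right ht)
  exact (I_q_delta_product_bound_general hδ0.le hδ1 hq.ne' hlog).trans <|
    div_le_div_of_nonneg_right (sub_le_self _ (by positivity)) (by linarith)
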